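/- arXiv:2512.17000 — 3 statements merged into one kernel-verified Lean document; each statement's English description precedes it below -/
import Mathlib

section
/- In the quantum Borel algebra 𝒪_q(B⁺) of type SO_n the following row relations hold: (i) z_{is} z_{it} = q^{−1} z_{it} z_{is} whenever i ≤ t < s ≤ n, s ≠ t', and (if n is odd) i ≠ n₀; (ii) z_{it'} z_{it} = q^{−2} z_{it} z_{it'} − (q − q^{−1}) Σ_{k=i}^{t−1} q^{k−t−1} z_{ik} z_{ik'} whenever i ≤ t < t' and (if n is odd) i ≠ n₀. -/
noncomputable section
open scoped TensorProduct

namespace SOq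

/-- `pr n k = n + 1 - k`, the "primed" index `k'`. -/
def pr (n k : ℕ) : ℕ := n + 1 - k

/-- `2 ρ_i` as an integer. -/
def twoRho (n i : ℕ) : ℤ :=
  if 2 * i < n + 1 then (n : ℤ) - 2 * i
  else if 2 * i = n + 1 then 0
  else (n : ℤ) + 2 - 2 * i

/-- Entries of the matrix `J`: `c_{ij} = δ_{j,i'} q^{-ρ_i}` (with `q^{1/2} := v`). -/
def Jc (n : ℕ) (v : ℂ) (i j : ℕ) : ℂ :=
  if j = pr n i then v ^ (-(twoRho n i)) else 0

/-- R-matrix coefficients `R^{ij}_{ab}`. -/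
def Rc (n : ℕ) (q v : ℂ) (i j a b : ℕ) : ℂ :=
  q ^ (((if i = j then 1 else 0) - (if i = pr n j then 1 else 0) : ℤ)) *
      (if i = a then (1 : ℂ) else 0) * (if j = b then (1 : ℂ) else 0) +
    (if a < i then (1 : ℂ) else 0) * (q - q⁻¹) *
      ((if j = a then (1 : ℂ) else 0) * (if i = b then (1 : ℂ) else 0) -
        Jc n v j i * Jc n v a b)

/-- The free algebra on the generators `z_{ij}`. -/
abbrev FA : Type := FreeAlgebra ℂ (ℕ × ℕ)

def zf (i j : ℕ) : FA := FreeAlgebra.ι ℂ (i, j)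

/-- The FRT relation element `FRT(i,b,j,a)`. -/
def frtRel (n : ℕ) (q v : ℂ) (i b j a : ℕ) : FA :=
  ∑ k ∈ Finset.Icc 1 n, ∑ l ∈ Finset.Icc 1 n,
    (Rc n q v l k a b • (zf i k * zf j l) - Rc n q v j i k l • (zf k a * zf l b))

/-- Entry `(i,j)` of `z J zᵗ J⁻¹ - Id` (note `J⁻¹ = J`). -/
def orthRel₁ (n : ℕ) (v : ℂ) (i j : ℕ) : FA :=
  (∑ k ∈ Finset.Icc 1 n, ∑ l ∈ Finset.Icc 1 n, ∑ m ∈ Finset.Icc 1 n,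
      (Jc n v k l * Jc n v m j) • (zf i k * zf m l)) - (if i = j then (1 : FA) else 0)

/-- Entry `(i,j)` of `J zᵗ J⁻¹ z - Id`. -/
def orthRel₂ (n : ℕ) (v : ℂ) (i j : ℕ) : FA :=
  (∑ k ∈ Finset.Icc 1 n, ∑ l ∈ Finset.Icc 1 n, ∑ m ∈ Finset.Icc 1 n,
      (Jc n v i k * Jc n v l m) • (zf l k * zf m j)) - (if i = j then (1 : FA) else 0)

/-- The defining relations of the quantum Borel algebra `𝒪_q(B⁺) ⊆ 𝒪_q(SO_n)`. -/
inductive Rel (n : ℕ) (q v : ℂ) : FA → FA → Prop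
  | frt : ∀ i b j a : ℕ, i ∈ Finset.Icc 1 n → b ∈ Finset.Icc 1 n → j ∈ Finset.Icc 1 n →
      a ∈ Finset.Icc 1 n → Rel n q v (frtRel n q v i b j a) 0
  | orth₁ : ∀ i j : ℕ, i ∈ Finset.Icc 1 n → j ∈ Finset.Icc 1 n →
      Rel n q v (orthRel₁ n v i j) 0
  | orth₂ : ∀ i j : ℕ, i ∈ Finset.Icc 1 n → j ∈ Finset.Icc 1 n →
      Rel n q v (orthRel₂ n v i j) 0
  | lower : ∀ i j : ℕ, j < i → Rel n q v (zf i j) 0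
  | out : ∀ i j : ℕ, (i = 0 ∨ j = 0 ∨ n < i ∨ n < j) → Rel n q v (zf i j) 0

/-- The quantum Borel algebra `𝒪_q(B⁺)`. -/
abbrev OB (n : ℕ) (q v : ℂ) : Type := RingQuot (Rel n q v)

/-- The generators `z_{ij}` of `𝒪_q(B⁺)`. -/
def z (n : ℕ) (q v : ℂ) (i j : ℕ) : OB n q v :=
  RingQuot.mkAlgHom ℂ (Rel n q v) (zf i j)

end SOq

namespace SOq

/-!
For a row `y` of the quantum matrix other than the middle one, the relations `FRT(i,b,i,a)` and
the `(i,i')` entry of `z J zᵗ J⁻¹ = Id` involve only `y`: they say that `y` lies on the quantum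
isotropic cone. When `t < s` and `s ≠ t'`, the relation at `(t,s)` is the `q`-commutation of `y_t`
and `y_s`. When `s = t'`, it also contains the part of `y J yᵗ` above `t`, which isotropy turns
into a sum over `m ≤ t`, so that
`q² y_t' y_t + (q² - 1) ∑_{m < t} q^{t-m} y_m' y_m = y_t y_t'`.
This triangular system is solved for the products `y_t' y_t`.
-/

section PrimedIndex

variable {n k l : ℕ}

lemma pr_pr (hk : k ≤ n) : pr n (pr n k) = k := by
  unfold pr; lia

lemma pr_mem_Icc (hk : k ∈ Finset.Icc 1 n) : pr n k ∈ Finset.Icc 1 n := by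
  rw [Finset.mem_Icc] at hk ⊢; unfold pr; lia

lemma eq_pr_comm (hk : k ≤ n) (hl : l ≤ n) : k = pr n l ↔ l = pr n k := by
  unfold pr; lia

lemma ne_pr_self (hk : 2 * k ≠ n + 1) : k ≠ pr n k := by
  unfold pr; lia

end PrimedIndex

section Contractions

variable {M : Type*} [AddCommGroup M] [Module ℂ M] {n : ℕ} {q v : ℂ}

lemma sum_Jc_smul {l : ℕ} (hl : l ∈ Finset.Icc 1 n) (x : ℕ → M) :
    ∑ k ∈ Finset.Icc 1 n, Jc n v k l • x k = Jc n v (pr n l) l • x (pr n l) := by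
  refine Finset.sum_eq_single_of_mem _ (pr_mem_Icc hl) fun k hk hkl => ?_
  rw [Finset.mem_Icc] at hk hl
  rw [Jc, if_neg (mt (eq_pr_comm hl.2 hk.2).mp hkl), zero_smul]

lemma Jc_pr_mul_Jc_pr (hq : q ≠ 0) (hv : v ^ 2 = q) {t m : ℕ} (ht : t < pr n t) (hm : m ≤ t) :
    Jc n v t (pr n t) * Jc n v (pr n m) m = q ^ ((t : ℤ) - m) := by
  have hv0 : v ≠ 0 := ne_zero_pow two_ne_zero (hv ▸ hq)
  unfold pr at ht
  have ht_rho : twoRho n t = n - 2 * t := by rw [twoRho, if_pos (by lia)]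
  have hm_rho : twoRho n (pr n m) = 2 * m - n := by
    unfold twoRho pr
    split_ifs <;> lia
  rw [Jc, if_pos rfl, Jc, if_pos (pr_pr (by lia)).symm, ht_rho, hm_rho, ← hv, ← zpow_natCast,
    ← zpow_mul, ← zpow_add₀ hv0]
  congr 1
  push_cast
  ring

lemma Rc_of_lt {a b : ℕ} (hab : a < b) (k l : ℕ) :
    Rc n q v l k a b =
      (if k = b ∧ l = a then q ^ (-(if a = pr n b then 1 else 0) : ℤ) else 0) +
        (if k = a ∧ l = b then q - q⁻¹ else 0) -
          if a < l then (q - q⁻¹) * Jc n v a b * Jc n v k l else 0 := by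
  have diag : q ^ ((if l = k then 1 else 0) - (if l = pr n k then 1 else 0) : ℤ) *
      (if l = a then (1 : ℂ) else 0) * (if k = b then (1 : ℂ) else 0) =
      if k = b ∧ l = a then q ^ (-(if a = pr n b then 1 else 0) : ℤ) else 0 := by
    by_cases h : k = b ∧ l = a
    · obtain ⟨rfl, rfl⟩ := h
      simp [hab.ne]
    · rw [if_neg h, mul_assoc, ite_zero_mul_ite_zero, if_neg (mt And.symm h), mul_zero]
  have flip : (if a < l then (1 : ℂ) else 0) *
      ((if k = a then (1 : ℂ) else 0) * (if l = b then (1 : ℂ) else 0)) =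
      if k = a ∧ l = b then 1 else 0 := by
    grind
  rw [Rc, diag]
  grind

lemma sum_Rc_smul_of_lt {a b : ℕ} (ha : a ∈ Finset.Icc 1 n) (hb : b ∈ Finset.Icc 1 n) (hab : a < b)
    (x : ℕ → ℕ → M) :
    ∑ k ∈ Finset.Icc 1 n, ∑ l ∈ Finset.Icc 1 n, Rc n q v l k a b • x k l =
      q ^ (-(if a = pr n b then 1 else 0) : ℤ) • x b a + (q - q⁻¹) • x a b -
        ((q - q⁻¹) * Jc n v a b) •
          ∑ l ∈ Finset.Ioc a n, Jc n v (pr n l) l • x (pr n l) l := by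
  have hIoc : Finset.Ioc a n = {l ∈ Finset.Icc 1 n | a < l} := by
    ext l; simp only [Finset.mem_Ioc, Finset.mem_filter, Finset.mem_Icc]; lia
  have contraction : ∑ k ∈ Finset.Icc 1 n, ∑ l ∈ Finset.Icc 1 n,
      (if a < l then ((q - q⁻¹) * Jc n v a b) • Jc n v k l • x k l else 0) =
      ((q - q⁻¹) * Jc n v a b) • ∑ l ∈ Finset.Ioc a n, Jc n v (pr n l) l • x (pr n l) l := by
    rw [Finset.sum_comm, hIoc, Finset.sum_filter, Finset.smul_sum]
    refine Finset.sum_congr rfl fun l hl => ?_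
    split_ifs
    · rw [← Finset.smul_sum, sum_Jc_smul hl fun k => x k l]
    · rw [Finset.sum_const_zero, smul_zero]
  rw [← contraction]
  simp only [Rc_of_lt hab, sub_smul _ (ite _ _ _), add_smul, ite_smul, zero_smul, mul_smul, ite_and,
    Finset.sum_sub_distrib, Finset.sum_add_distrib, Finset.sum_ite_irrel, Finset.sum_const_zero,
    Finset.sum_ite_eq', if_pos ha, if_pos hb]

lemma sum_Rc_diag_smul {i : ℕ} (hi : i ∈ Finset.Icc 1 n) (hmid : 2 * i ≠ n + 1)
    (x : ℕ → ℕ → M) :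
    ∑ k ∈ Finset.Icc 1 n, ∑ l ∈ Finset.Icc 1 n, Rc n q v i i k l • x k l = q • x i i := by
  have hRc (k l : ℕ) : Rc n q v i i k l • x k l =
      if i = k then (if i = l then q • x k l else 0) else 0 := by
    rcases eq_or_ne i k with rfl | hk <;> rcases eq_or_ne i l with rfl | hl <;>
      simp [Rc, Jc, ne_pr_self hmid, *]
  simp only [hRc, Finset.sum_ite_irrel, Finset.sum_const_zero, Finset.sum_ite_eq, if_pos hi]

end Contractions

section TriangularInversion

variable {K M : Type*} [Field K] [AddCommGroup M] [Module K M] {q : K} {f g : ℕ → M} {c t : ℕ}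

lemma sum_Ico_succ_zpow_sub_smul (hq : q ≠ 0) (hct : c ≤ t) (f : ℕ → M) :
    ∑ k ∈ Finset.Ico c (t + 1), q ^ (((t + 1 : ℕ) : ℤ) - k) • f k =
      q • (∑ k ∈ Finset.Ico c t, q ^ ((t : ℤ) - k) • f k + f t) := by
  have hexp (k : ℕ) : q ^ (((t + 1 : ℕ) : ℤ) - k) = q * q ^ ((t : ℤ) - k) := by
    rw [← zpow_one_add₀ hq]; congr 1; push_cast; ring
  simp only [hexp, mul_smul, ← Finset.smul_sum, Finset.sum_Ico_succ_top hct, sub_self, zpow_zero,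
    one_smul, smul_add]

lemma sum_zpow_sub_smul_eq_sum_inv_zpow_sub_smul (hq : q ≠ 0) (hct : c ≤ t)
    (h : ∀ m ∈ Finset.Ico c t,
      q ^ 2 • f m + (q ^ 2 - 1) • ∑ k ∈ Finset.Ico c m, q ^ ((m : ℤ) - k) • f k = g m) :
    ∑ k ∈ Finset.Ico c t, q ^ ((t : ℤ) - k) • f k =
      ∑ k ∈ Finset.Ico c t, q⁻¹ ^ ((t : ℤ) - k) • g k := by
  induction t, hct using Nat.le_induction with
  | base => simp only [Finset.Ico_self, Finset.sum_empty]
  | succ t hct ih =>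
    specialize ih fun m hm => h m (Finset.Ico_subset_Ico_right t.le_succ hm)
    rw [sum_Ico_succ_zpow_sub_smul hq hct, sum_Ico_succ_zpow_sub_smul (inv_ne_zero hq) hct, ← ih,
      ← h t (Finset.mem_Ico.mpr ⟨hct, t.lt_succ_self⟩)]
    match_scalars <;> field_simp
    ring

lemma eq_zpow_smul_sub_sum_of_triangular (hq : q ≠ 0) (hct : c ≤ t)
    (h : ∀ m ∈ Finset.Icc c t,
      q ^ 2 • f m + (q ^ 2 - 1) • ∑ k ∈ Finset.Ico c m, q ^ ((m : ℤ) - k) • f k = g m) :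
    f t = q ^ (-2 : ℤ) • g t -
      (q - q⁻¹) • ∑ k ∈ Finset.Ico c t, q ^ ((k : ℤ) - t - 1) • g k := by
  have hexp (k : ℕ) : q ^ ((k : ℤ) - t - 1) = q⁻¹ * q⁻¹ ^ ((t : ℤ) - k) := by
    rw [inv_zpow', neg_sub, zpow_sub_one₀ hq, mul_comm]
  simp only [hexp, mul_smul, ← Finset.smul_sum]
  rw [← sum_zpow_sub_smul_eq_sum_inv_zpow_sub_smul hq hct fun m hm =>
      h m (Finset.Ico_subset_Icc_self hm), ← h t (Finset.right_mem_Icc.mpr hct)]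
  match_scalars <;> field_simp
  ring

end TriangularInversion

/-- A vector `y` of elements of a `ℂ`-algebra whose coordinates satisfy the relations of the quantum
isotropic cone, `∑ R^{lk}_{ab} y_k y_l = q y_a y_b` and `y J yᵗ = 0`. Only `y 1, …, y n` matter. -/
structure IsQuantumIsotropic {A : Type*} [Ring A] [Algebra ℂ A] (n : ℕ) (q v : ℂ) (y : ℕ → A) :
    Prop where
  sum_Rc : ∀ a ∈ Finset.Icc 1 n, ∀ b ∈ Finset.Icc 1 n,
    ∑ k ∈ Finset.Icc 1 n, ∑ l ∈ Finset.Icc 1 n, Rc n q v l k a b • (y k * y l) = q • (y a * y b)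
  sum_Jc : ∑ k ∈ Finset.Icc 1 n, ∑ l ∈ Finset.Icc 1 n, Jc n v k l • (y k * y l) = 0

namespace IsQuantumIsotropic

variable {A : Type*} [Ring A] [Algebra ℂ A] {n : ℕ} {q v : ℂ} {y : ℕ → A} {t s : ℕ}

lemma zpow_smul_mul_eq (hy : IsQuantumIsotropic n q v y) (ht : 1 ≤ t) (hts : t < s) (hs : s ≤ n) :
    q ^ (-(if t = pr n s then 1 else 0) : ℤ) • (y s * y t) =
      q⁻¹ • (y t * y s) + ((q - q⁻¹) * Jc n v t s) •
        ∑ l ∈ Finset.Ioc t n, Jc n v (pr n l) l • (y (pr n l) * y l) := by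
  have ht_mem : t ∈ Finset.Icc 1 n := Finset.mem_Icc.mpr ⟨ht, by lia⟩
  have hs_mem : s ∈ Finset.Icc 1 n := Finset.mem_Icc.mpr ⟨by lia, hs⟩
  have h := hy.sum_Rc t ht_mem s hs_mem
  rw [sum_Rc_smul_of_lt ht_mem hs_mem hts fun k l => y k * y l] at h
  linear_combination (norm := module) h

lemma sum_Ioc_eq_neg_sum_Icc (hy : IsQuantumIsotropic n q v y) (ht : t ≤ n) :
    ∑ l ∈ Finset.Ioc t n, Jc n v (pr n l) l • (y (pr n l) * y l) =
      -∑ m ∈ Finset.Icc 1 t, Jc n v (pr n m) m • (y (pr n m) * y m) := by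
  have h := hy.sum_Jc
  rw [Finset.sum_comm, Finset.sum_congr rfl fun l hl => sum_Jc_smul hl fun k => y k * y l] at h
  rw [eq_neg_iff_add_eq_zero, add_comm, ← h]
  exact Finset.sum_Ioc_consecutive _ t.zero_le ht

lemma mul_eq_inv_smul_mul (hy : IsQuantumIsotropic n q v y) (ht : 1 ≤ t) (hts : t < s)
    (hs : s ≤ n) (hne : s ≠ pr n t) : y s * y t = q⁻¹ • (y t * y s) := by
  have hne' : t ≠ pr n s := mt (eq_pr_comm (hts.le.trans hs) hs).mp hne
  have h := hy.zpow_smul_mul_eq ht hts hs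
  rwa [if_neg hne', Jc, if_neg hne, mul_zero, zero_smul, add_zero, neg_zero, zpow_zero,
    one_smul] at h

lemma sq_smul_mul_add_sum_eq (hy : IsQuantumIsotropic n q v y) (hq : q ≠ 0) (hv : v ^ 2 = q)
    (ht : 1 ≤ t) (htt : t < pr n t) :
    q ^ 2 • (y (pr n t) * y t) +
      (q ^ 2 - 1) • ∑ m ∈ Finset.Ico 1 t, q ^ ((t : ℤ) - m) • (y (pr n m) * y m) =
        y t * y (pr n t) := by
  have htn : t ≤ n := by unfold pr at htt; lia
  have hsum : Jc n v t (pr n t) • ∑ m ∈ Finset.Icc 1 t, Jc n v (pr n m) m • (y (pr n m) * y m) =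
      ∑ m ∈ Finset.Ico 1 t, q ^ ((t : ℤ) - m) • (y (pr n m) * y m) + y (pr n t) * y t := by
    rw [Finset.smul_sum, ← Finset.sum_Ico_add_eq_sum_Icc ht, smul_smul,
      Jc_pr_mul_Jc_pr hq hv htt le_rfl, sub_self, zpow_zero, one_smul]
    congr 1
    refine Finset.sum_congr rfl fun m hm => ?_
    rw [smul_smul, Jc_pr_mul_Jc_pr hq hv htt (Finset.mem_Ico.mp hm).2.le]
  have h := hy.zpow_smul_mul_eq ht htt (by unfold pr; lia)
  rw [if_pos (pr_pr htn).symm, zpow_neg_one, hy.sum_Ioc_eq_neg_sum_Icc htn, mul_smul, smul_neg,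
    hsum] at h
  linear_combination (norm := skip) q • h
  match_scalars <;> field_simp <;> ring

lemma mul_pr_eq (hy : IsQuantumIsotropic n q v y) (hq : q ≠ 0) (hv : v ^ 2 = q)
    (ht : 1 ≤ t) (htt : t < pr n t) :
    y (pr n t) * y t = q ^ (-2 : ℤ) • (y t * y (pr n t)) -
      (q - q⁻¹) • ∑ k ∈ Finset.Ico 1 t, q ^ ((k : ℤ) - t - 1) • (y k * y (pr n k)) := by
  refine eq_zpow_smul_sub_sum_of_triangular (f := fun m => y (pr n m) * y m)
    (g := fun m => y m * y (pr n m)) hq ht fun m hm => ?_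
  obtain ⟨hm1, hmt⟩ := Finset.mem_Icc.mp hm
  exact hy.sq_smul_mul_add_sum_eq hq hv hm1 (by unfold pr at *; lia)

end IsQuantumIsotropic

section Rows

variable {A : Type*} [Ring A] [Algebra ℂ A] {n i : ℕ} {q v : ℂ}

lemma map_orthRel₁_pr (φ : FA →ₐ[ℂ] A) (hi : i ∈ Finset.Icc 1 n) (hmid : 2 * i ≠ n + 1) :
    φ (orthRel₁ n v i (pr n i)) = Jc n v i (pr n i) •
      ∑ k ∈ Finset.Icc 1 n, ∑ l ∈ Finset.Icc 1 n, Jc n v k l • (φ (zf i k) * φ (zf i l)) := by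
  have hm (k l : ℕ) : ∑ m ∈ Finset.Icc 1 n,
      (Jc n v k l * Jc n v m (pr n i)) • (φ (zf i k) * φ (zf m l)) =
      Jc n v i (pr n i) • Jc n v k l • (φ (zf i k) * φ (zf i l)) := by
    simp only [mul_comm (Jc n v k l), mul_smul]
    have h := sum_Jc_smul (v := v) (pr_mem_Icc hi)
      fun m => Jc n v k l • (φ (zf i k) * φ (zf m l))
    rwa [pr_pr (Finset.mem_Icc.mp hi).2] at h
  simp only [orthRel₁, if_neg (ne_pr_self hmid), sub_zero, map_sum, map_smul, map_mul, hm,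
    Finset.smul_sum]

lemma isQuantumIsotropic_row (φ : FA →ₐ[ℂ] A) (hv : v ≠ 0) (hi : i ∈ Finset.Icc 1 n)
    (hmid : 2 * i ≠ n + 1)
    (frt : ∀ a ∈ Finset.Icc 1 n, ∀ b ∈ Finset.Icc 1 n, φ (frtRel n q v i b i a) = 0)
    (orth : φ (orthRel₁ n v i (pr n i)) = 0) :
    IsQuantumIsotropic n q v fun j => φ (zf i j) where
  sum_Rc a ha b hb := by
    have h := frt a ha b hb
    simp only [frtRel, map_sum, map_sub, map_smul, map_mul, Finset.sum_sub_distrib] at h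
    rwa [sum_Rc_diag_smul hi hmid fun k l => φ (zf k a) * φ (zf l b), sub_eq_zero] at h
  sum_Jc := by
    have hJ : Jc n v i (pr n i) ≠ 0 := by
      rw [Jc, if_pos rfl]
      exact zpow_ne_zero _ hv
    rw [map_orthRel₁_pr φ hi hmid] at orth
    exact (smul_eq_zero.mp orth).resolve_left hJ

lemma isQuantumIsotropic_z (hv : v ≠ 0) (hi : i ∈ Finset.Icc 1 n) (hmid : 2 * i ≠ n + 1) :
    IsQuantumIsotropic n q v (z n q v i) := by
  refine isQuantumIsotropic_row (RingQuot.mkAlgHom ℂ (Rel n q v)) hv hi hmid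
    (fun a ha b hb => ?_) ?_
  · rw [RingQuot.mkAlgHom_rel ℂ (Rel.frt i b i a hi hb hi ha), map_zero]
  · rw [RingQuot.mkAlgHom_rel ℂ (Rel.orth₁ i (pr n i) hi (pr_mem_Icc hi)), map_zero]

lemma z_eq_zero_of_lt {j : ℕ} (hji : j < i) : z n q v i j = 0 := by
  rw [z, RingQuot.mkAlgHom_rel ℂ (Rel.lower i j hji), map_zero]

end Rows

/-- In `𝒪_q(B⁺)` the `i`-th row starts at its `i`-th entry; `i = 1` gives the relations in the
non-middle rows of `𝒪_q(SO_n)` itself. -/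
theorem row_relations_general {A : Type*} [Ring A] [Algebra ℂ A] {n : ℕ} {q v : ℂ} {y : ℕ → A}
    (hy : IsQuantumIsotropic n q v y) (hq : q ≠ 0) (hv : v ^ 2 = q) :
    (∀ t s : ℕ, 1 ≤ t → t < s → s ≤ n → s ≠ pr n t → y s * y t = q⁻¹ • (y t * y s)) ∧
    (∀ i t : ℕ, 1 ≤ i → 1 ≤ t → t < pr n t → (∀ k ∈ Finset.Ico 1 i, y k = 0) →
      y (pr n t) * y t = q ^ (-2 : ℤ) • (y t * y (pr n t)) -
        (q - q⁻¹) • ∑ k ∈ Finset.Ico i t, q ^ ((k : ℤ) - t - 1) • (y k * y (pr n k))) := by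
  refine ⟨fun t s => hy.mul_eq_inv_smul_mul, fun i t hi ht htt hzero => ?_⟩
  rw [hy.mul_pr_eq hq hv ht htt]
  congr 2
  refine (Finset.sum_subset (Finset.Ico_subset_Ico_left hi) fun k hk hki => ?_).symm
  rw [hzero k (by simp only [Finset.mem_Ico] at *; lia), zero_mul, smul_zero]

/-- Row relations in the quantum Borel algebra `𝒪_q(B⁺)` of type `SO_n`. -/
theorem row_relations (n : ℕ) (hn : 3 ≤ n) (q v : ℂ) (hq0 : q ≠ 0) (hv : v ^ 2 = q) :
    (∀ i t s : ℕ, 1 ≤ i → i ≤ t → t < s → s ≤ n → s ≠ pr n t → 2 * i ≠ n + 1 →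
      z n q v i s * z n q v i t = q⁻¹ • (z n q v i t * z n q v i s)) ∧
    (∀ i t : ℕ, 1 ≤ i → i ≤ t → t < pr n t → 2 * i ≠ n + 1 →
      z n q v i (pr n t) * z n q v i t =
        (q ^ (-2 : ℤ)) • (z n q v i t * z n q v i (pr n t)) -
          (q - q⁻¹) •
            ∑ k ∈ Finset.Ico i t,
              (q ^ ((k : ℤ) - (t : ℤ) - 1)) • (z n q v i k * z n q v i (pr n k))) := by
  have hv0 : v ≠ 0 := ne_zero_pow two_ne_zero (hv ▸ hq0)
  have hrow {i : ℕ} (hi : 1 ≤ i) (hin : i ≤ n) (hmid : 2 * i ≠ n + 1) :=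
    row_relations_general (isQuantumIsotropic_z hv0 (Finset.mem_Icc.mpr ⟨hi, hin⟩) hmid) hq0 hv
  refine ⟨fun i t s hi hit hts hsn hs hmid => ?_, fun i t hi hit htt hmid => ?_⟩
  · exact (hrow hi (by lia) hmid).1 t s (hi.trans hit) hts hsn hs
  · have hin : i ≤ n := by unfold pr at htt; lia
    exact (hrow hi hin hmid).2 i t hi (hi.trans hit) htt fun k hk =>
      z_eq_zero_of_lt (Finset.mem_Ico.mp hk).2

end SOq
end
end

section
/- In the quantum Borel algebra 𝒪_q(B⁺) of type A_θ: each z_{kk} (1 ≤ k ≤ θ+1) is invertible, and the elements defined recursively by E_{i,i+1} := −(q − q^{−1})^{−1} z_{i,i+1} z_{i+1,i+1}^{−1} for 1 ≤ i ≤ θ, and E_{i,j} := E_{i,j−1} E_{j−1,j} − q^{−1} E_{j−1,j} E_{i,j−1} for j − i ≥ 2, satisfy E_{i,j} = (−1)^{j−i} q^{i−j+1} (q − q^{−1})^{−1} z_{ij} z_{jj}^{−1} for all 1 ≤ i < j ≤ θ+1. (Under the isomorphism ψ : U_q^P(𝔟⁺) → 𝒪_q(B⁺), E_{i,j} is the image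 of the iterated q-bracket root vector of the positive root α_i + ⋯ + α_{j−1}.) -/
/-!
Modulo the entries below the diagonal, only the identity permutation survives in `det_q = 1`, so
the commuting elements `z_{kk}` have product `1` and each of them is a unit. For `i < m < j` the
relations `z_{mm} z_{mj} = q z_{mj} z_{mm}`, `z_{im} z_{jj} = z_{jj} z_{im}` and
`z_{im} z_{mj} - z_{mj} z_{im} = (q - q⁻¹) z_{ij} z_{mm}` show that the `q⁻¹`-bracket of
`z_{im} z_{mm}⁻¹` and `z_{mj} z_{jj}⁻¹` is `q⁻¹ (q - q⁻¹) z_{ij} z_{jj}⁻¹`. Taking `m = j - 1`,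
the root vector formula follows by induction on `j`, each step multiplying the coefficient by
`-q⁻¹`.
-/

noncomputable section

namespace SLq

/-- The free algebra on the generators `z_{ij}`. -/
abbrev FA : Type := FreeAlgebra ℂ (ℕ × ℕ)

def zf (i j : ℕ) : FA := FreeAlgebra.ι ℂ (i, j)

/-- The number of inversions (the length) of a permutation. -/
def len {m : ℕ} (σ : Equiv.Perm (Fin m)) : ℕ :=
  (Finset.univ.filter (fun p : Fin m × Fin m => p.1 < p.2 ∧ σ p.2 < σ p.1)).card

/-- The quantum determinant `det_q = ∑_σ (-q)^{ℓ(σ)} z_{1σ(1)} ⋯ z_{θ+1,σ(θ+1)}`. -/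
def detq (θ : ℕ) (q : ℂ) : FA :=
  ∑ σ : Equiv.Perm (Fin (θ + 1)),
    ((-q) ^ len σ) •
      (List.ofFn (fun k : Fin (θ + 1) => zf ((k : ℕ) + 1) ((σ k : ℕ) + 1))).prod

/-- Defining relations of the quantum Borel algebra `𝒪_q(B⁺) ⊆ 𝒪_q(SL_{θ+1})`. -/
inductive Rel (θ : ℕ) (q : ℂ) : FA → FA → Prop
  | col : ∀ i j s : ℕ, 1 ≤ i → i < j → j ≤ θ + 1 → 1 ≤ s → s ≤ θ + 1 →
      Rel θ q (zf i s * zf j s) (q • (zf j s * zf i s))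
  | row : ∀ i j s : ℕ, 1 ≤ i → i < j → j ≤ θ + 1 → 1 ≤ s → s ≤ θ + 1 →
      Rel θ q (zf s i * zf s j) (q • (zf s j * zf s i))
  | comm : ∀ i j s t : ℕ, 1 ≤ i → i < j → j ≤ θ + 1 → 1 ≤ s → s < t → t ≤ θ + 1 →
      Rel θ q (zf i t * zf j s) (zf j s * zf i t)
  | qcomm : ∀ i j s t : ℕ, 1 ≤ i → i < j → j ≤ θ + 1 → 1 ≤ s → s < t → t ≤ θ + 1 →
      Rel θ q (zf i s * zf j t - zf j t * zf i s) ((q - q⁻¹) • (zf i t * zf j s))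
  | det : Rel θ q (detq θ q) 1
  | lower : ∀ i j : ℕ, j < i → Rel θ q (zf i j) 0
  | out : ∀ i j : ℕ, (i = 0 ∨ j = 0 ∨ θ + 1 < i ∨ θ + 1 < j) → Rel θ q (zf i j) 0

/-- The quantum Borel algebra `𝒪_q(B⁺)` of type `A_θ`. -/
abbrev OB (θ : ℕ) (q : ℂ) : Type := RingQuot (Rel θ q)

/-- The generators `z_{ij}` of `𝒪_q(B⁺)`. -/
def z (θ : ℕ) (q : ℂ) (i j : ℕ) : OB θ q :=
  RingQuot.mkAlgHom ℂ (Rel θ q) (zf i j)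

section General

theorem perm_eq_one_of_forall_le {α : Type*} [PartialOrder α] [Finite α] {σ : Equiv.Perm α}
    (h : ∀ a, a ≤ σ a) : σ = 1 := by
  ext a
  have hpow : σ^[orderOf σ - 1] (σ a) = a := by
    rw [← Function.iterate_succ_apply, Nat.succ_eq_add_one,
      Nat.sub_add_cancel (orderOf_pos σ), ← Equiv.Perm.coe_pow, pow_orderOf_eq_one,
      Equiv.Perm.one_apply]
  exact le_antisymm ((Function.id_le_iterate_of_id_le h _ (σ a)).trans_eq hpow) (h a)

theorem isUnit_of_mem_of_isUnit_list_prod {M : Type*} [Monoid M] {l : List M}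
    (hcomm : ∀ x ∈ l, ∀ y ∈ l, Commute x y) (hl : IsUnit l.prod) {a : M} (ha : a ∈ l) :
    IsUnit a := by
  classical
  have ha_erase : Commute a (l.erase a).prod :=
    Commute.list_prod_right _ _ fun y hy => hcomm a ha y (List.mem_of_mem_erase hy)
  rw [← List.prod_erase_of_comm ha hcomm, ha_erase.isUnit_mul_iff] at hl
  exact hl.1

theorem sub_inv_ne_zero {K : Type*} [Field K] {q : K} (hq0 : q ≠ 0) (hq1 : q ≠ 1)
    (hqm1 : q ≠ -1) : q - q⁻¹ ≠ 0 := by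
  rw [sub_ne_zero, ne_comm, Ne, inv_eq_self₀]
  tauto

end General

section QBracket

/-- The `c`-bracket `[x, y]_c = x y - c y x` of an algebra; the root vectors `E_{i,j}` are
iterated brackets with `c = q⁻¹`. -/
def qBracket {R A : Type*} [CommRing R] [Ring A] [Algebra R A] (c : R) (x y : A) : A :=
  x * y - c • (y * x)

theorem qBracket_smul_smul {R A : Type*} [CommRing R] [Ring A] [Algebra R A] (c a b : R)
    (x y : A) : qBracket c (a • x) (b • y) = (a * b) • qBracket c x y := by
  simp only [qBracket, smul_mul_smul_comm, smul_sub, smul_comm c, mul_comm b a]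

variable {K A : Type*} [Field K] [Ring A] [Algebra K A]

theorem units_inv_mul_of_mul_eq_smul {q : K} (hq : q ≠ 0) {u : Aˣ} {y : A}
    (h : (u : A) * y = q • (y * (u : A))) :
    (↑u⁻¹ : A) * y = q⁻¹ • (y * (↑u⁻¹ : A)) := by
  rw [Units.inv_mul_eq_iff_eq_mul, mul_smul_comm, ← mul_assoc, h, smul_mul_assoc,
    Units.mul_inv_cancel_right, inv_smul_smul₀ hq]

theorem qBracket_mul_units_inv {q c : K} (hq : q ≠ 0) {u v : Aˣ} {x y t : A}
    (huv : Commute (u : A) v) (huy : (u : A) * y = q • (y * (u : A))) (hxv : Commute x (v : A))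
    (hxy : x * y - y * x = c • (t * (u : A))) :
    qBracket q⁻¹ (x * (↑u⁻¹ : A)) (y * (↑v⁻¹ : A)) = (q⁻¹ * c) • (t * (↑v⁻¹ : A)) := by
  have hleft : x * (↑u⁻¹ : A) * (y * (↑v⁻¹ : A)) =
      q⁻¹ • (x * y * ((↑u⁻¹ : A) * (↑v⁻¹ : A))) := by
    calc x * (↑u⁻¹ : A) * (y * (↑v⁻¹ : A)) = x * ((↑u⁻¹ : A) * y) * (↑v⁻¹ : A) := by
          simp only [mul_assoc]
      _ = q⁻¹ • (x * y * ((↑u⁻¹ : A) * (↑v⁻¹ : A))) := by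
          rw [units_inv_mul_of_mul_eq_smul hq huy]
          simp only [mul_smul_comm, smul_mul_assoc, mul_assoc]
  have hright : y * (↑v⁻¹ : A) * (x * (↑u⁻¹ : A)) =
      y * x * ((↑u⁻¹ : A) * (↑v⁻¹ : A)) := by
    calc y * (↑v⁻¹ : A) * (x * (↑u⁻¹ : A)) = y * ((↑v⁻¹ : A) * x) * (↑u⁻¹ : A) := by
          simp only [mul_assoc]
      _ = y * x * ((↑v⁻¹ : A) * (↑u⁻¹ : A)) := by
          rw [← hxv.units_inv_right.eq]
          simp only [mul_assoc]
      _ = y * x * ((↑u⁻¹ : A) * (↑v⁻¹ : A)) := by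
          rw [huv.units_inv_left.units_inv_right.eq]
  calc qBracket q⁻¹ (x * (↑u⁻¹ : A)) (y * (↑v⁻¹ : A))
      = q⁻¹ • ((x * y - y * x) * ((↑u⁻¹ : A) * (↑v⁻¹ : A))) := by
        rw [qBracket, hleft, hright, ← smul_sub, ← sub_mul]
    _ = (q⁻¹ * c) • (t * (↑v⁻¹ : A)) := by
        rw [hxy, smul_mul_assoc, smul_smul, mul_assoc, Units.mul_inv_cancel_left]

end QBracket

section RootCoeff

variable {K : Type*} [Field K]

/-- The coefficient `(-1)^{j-i} q^{i-j+1} (q - q⁻¹)⁻¹` of `z_{ij} z_{jj}⁻¹` in the root vector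
`E_{i,j}`. The exponent of `-1` is a truncated subtraction, so only `i ≤ j` is meaningful. -/
def rootCoeff (q : K) (i j : ℕ) : K :=
  (-1) ^ (j - i) * q ^ ((i : ℤ) - (j : ℤ) + 1) * (q - q⁻¹)⁻¹

theorem rootCoeff_self_succ (q : K) (i : ℕ) : rootCoeff q i (i + 1) = -(q - q⁻¹)⁻¹ := by
  simp [rootCoeff]

theorem rootCoeff_succ_right {q : K} (hq : q ≠ 0) {i j : ℕ} (hij : i ≤ j) :
    rootCoeff q i (j + 1) = -q⁻¹ * rootCoeff q i j := by
  have hexp : (i : ℤ) - ((j + 1 : ℕ) : ℤ) + 1 = (i : ℤ) - (j : ℤ) + 1 - 1 := by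
    push_cast
    ring
  rw [rootCoeff, rootCoeff, hexp, zpow_sub_one₀ hq, Nat.succ_sub hij, pow_succ]
  ring

end RootCoeff

section Relations

variable {θ : ℕ} {q : ℂ} {i j s t : ℕ}

theorem z_eq_zero_of_lt (h : j < i) : z θ q i j = 0 := by
  simpa only [z, map_zero] using
    RingQuot.mkAlgHom_rel ℂ (Rel.lower (θ := θ) (q := q) i j h)

theorem z_mul_z_same_row (hi : 1 ≤ i) (hij : i < j) (hj : j ≤ θ + 1) (hs : 1 ≤ s)
    (hs' : s ≤ θ + 1) : z θ q s i * z θ q s j = q • (z θ q s j * z θ q s i) := by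
  simpa only [z, map_mul, map_smul] using
    RingQuot.mkAlgHom_rel ℂ (Rel.row (q := q) i j s hi hij hj hs hs')

theorem z_mul_z_sub_z_mul_z (hi : 1 ≤ i) (hij : i < j) (hj : j ≤ θ + 1) (hs : 1 ≤ s)
    (hst : s < t) (ht : t ≤ θ + 1) :
    z θ q i s * z θ q j t - z θ q j t * z θ q i s =
      (q - q⁻¹) • (z θ q i t * z θ q j s) := by
  simpa only [z, map_mul, map_smul, map_sub] using
    RingQuot.mkAlgHom_rel ℂ (Rel.qcomm (q := q) i j s t hi hij hj hs hst ht)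

theorem commute_z_z_diag_of_lt (hi : 1 ≤ i) (hij : i < j) (hs : 1 ≤ s) (hsj : s < j)
    (hj : j ≤ θ + 1) : Commute (z θ q i s) (z θ q j j) := by
  have hcross := z_mul_z_sub_z_mul_z (q := q) hi hij hj hs hsj hj
  rwa [z_eq_zero_of_lt hsj, mul_zero, smul_zero, sub_eq_zero] at hcross

theorem commute_z_diag (hi : 1 ≤ i) (hi' : i ≤ θ + 1) (hj : 1 ≤ j) (hj' : j ≤ θ + 1) :
    Commute (z θ q i i) (z θ q j j) := by
  rcases lt_trichotomy i j with hij | rfl | hji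
  · exact commute_z_z_diag_of_lt hi hij hi hij hj'
  · exact Commute.refl _
  · exact (commute_z_z_diag_of_lt hj hji hj hji hi').symm

end Relations

section Determinant

theorem len_one (m : ℕ) : len (1 : Equiv.Perm (Fin m)) = 0 := by
  rw [len, Finset.card_eq_zero, Finset.filter_eq_empty_iff]
  rintro p - ⟨hlt, hgt⟩
  exact lt_asymm hlt hgt

theorem sum_perm_smul_prod_z_eq_one (θ : ℕ) (q : ℂ) :
    ∑ σ : Equiv.Perm (Fin (θ + 1)),
      ((-q) ^ len σ) •
        (List.ofFn fun k : Fin (θ + 1) => z θ q ((k : ℕ) + 1) ((σ k : ℕ) + 1)).prod = 1 := by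
  simpa only [detq, map_sum, map_smul, map_list_prod, List.map_ofFn, map_one, z,
    Function.comp_def] using RingQuot.mkAlgHom_rel ℂ (Rel.det (θ := θ) (q := q))

theorem prod_z_perm_eq_zero {θ : ℕ} {q : ℂ} {σ : Equiv.Perm (Fin (θ + 1))} (hσ : σ ≠ 1) :
    (List.ofFn fun k : Fin (θ + 1) => z θ q ((k : ℕ) + 1) ((σ k : ℕ) + 1)).prod = 0 := by
  obtain ⟨k, hk⟩ : ∃ k, σ k < k := by
    by_contra! hle
    exact hσ (perm_eq_one_of_forall_le hle)
  exact List.prod_eq_zero (List.mem_ofFn.2 ⟨k, z_eq_zero_of_lt (Nat.add_lt_add_right hk 1)⟩)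

theorem prod_z_diag_eq_one (θ : ℕ) (q : ℂ) :
    (List.ofFn fun k : Fin (θ + 1) => z θ q ((k : ℕ) + 1) ((k : ℕ) + 1)).prod = 1 := by
  have hdet := sum_perm_smul_prod_z_eq_one θ q
  rw [Fintype.sum_eq_single 1 fun σ hσ => by rw [prod_z_perm_eq_zero hσ, smul_zero]] at hdet
  simpa only [len_one, pow_zero, one_smul, Equiv.Perm.one_apply] using hdet

theorem isUnit_z_diag {θ : ℕ} {q : ℂ} {k : ℕ} (hk : 1 ≤ k) (hk' : k ≤ θ + 1) :
    IsUnit (z θ q k k) := by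
  refine isUnit_of_mem_of_isUnit_list_prod ?_ ((prod_z_diag_eq_one θ q).symm ▸ isUnit_one)
    (List.mem_ofFn.2 ⟨⟨k - 1, by lia⟩, by simp only [Nat.sub_add_cancel hk]⟩)
  simp only [List.mem_ofFn, forall_exists_index, forall_apply_eq_imp_iff]
  exact fun _ _ => commute_z_diag (by lia) (by lia) (by lia) (by lia)

end Determinant

theorem qBracket_z_mul_units_inv {θ : ℕ} {q : ℂ} (hq : q ≠ 0) {i m j : ℕ} (hi : 1 ≤ i)
    (him : i < m) (hmj : m < j) (hj : j ≤ θ + 1) {u v : (OB θ q)ˣ}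
    (hu : (u : OB θ q) = z θ q m m) (hv : (v : OB θ q) = z θ q j j) :
    qBracket q⁻¹ (z θ q i m * (↑u⁻¹ : OB θ q)) (z θ q m j * (↑v⁻¹ : OB θ q)) =
      (q⁻¹ * (q - q⁻¹)) • (z θ q i j * (↑v⁻¹ : OB θ q)) := by
  have hm : 1 ≤ m := hi.trans him.le
  have hm' : m ≤ θ + 1 := hmj.le.trans hj
  apply qBracket_mul_units_inv hq
  · rw [hu, hv]
    exact commute_z_diag hm hm' (hm.trans hmj.le) hj
  · rw [hu]
    exact z_mul_z_same_row hm hmj hj hm hm'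
  · rw [hv]
    exact commute_z_z_diag_of_lt hi (him.trans hmj) hm hmj hj
  · rw [hu]
    exact z_mul_z_sub_z_mul_z hi him hm' hm hmj hj

/-- In `𝒪_q(B⁺)` of type `A_θ` each `z_{kk}` is invertible, and the
root vectors defined recursively by `E_{i,i+1} = -(q-q⁻¹)⁻¹ z_{i,i+1} z_{i+1,i+1}⁻¹` and
`E_{i,j} = E_{i,j-1} E_{j-1,j} - q⁻¹ E_{j-1,j} E_{i,j-1}` satisfy
`E_{i,j} = (-1)^{j-i} q^{i-j+1} (q-q⁻¹)⁻¹ z_{ij} z_{jj}⁻¹`. -/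
theorem rootvectors_A (θ : ℕ) (hθ : 1 ≤ θ) (q : ℂ) (hq0 : q ≠ 0) (hq1 : q ≠ 1)
    (hqm1 : q ≠ -1) :
    (∀ k : ℕ, 1 ≤ k → k ≤ θ + 1 → IsUnit (z θ q k k)) ∧
    (∀ w : ℕ → OB θ q,
      (∀ k : ℕ, 1 ≤ k → k ≤ θ + 1 → z θ q k k * w k = 1 ∧ w k * z θ q k k = 1) →
      ∀ E : ℕ → ℕ → OB θ q,
        (∀ i : ℕ, 1 ≤ i → i ≤ θ →
          E i (i + 1) = (-(q - q⁻¹)⁻¹) • (z θ q i (i + 1) * w (i + 1))) →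
        (∀ i j : ℕ, 1 ≤ i → i + 2 ≤ j → j ≤ θ + 1 →
          E i j = E i (j - 1) * E (j - 1) j - q⁻¹ • (E (j - 1) j * E i (j - 1))) →
        ∀ i j : ℕ, 1 ≤ i → i < j → j ≤ θ + 1 →
          E i j = ((-1 : ℂ) ^ (j - i) * q ^ ((i : ℤ) - (j : ℤ) + 1) * (q - q⁻¹)⁻¹) •
            (z θ q i j * w j)) := by
  refine ⟨fun k hk hk' => isUnit_z_diag hk hk', fun w hw E hE_simple hE_step i j hi hij hj => ?_⟩
  change E i j = rootCoeff q i j • (z θ q i j * w j)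
  induction j, hij using Nat.le_induction with
  | base => rw [hE_simple i hi (by lia), rootCoeff_self_succ]
  | succ j hij ih =>
    obtain ⟨hzj, hjz⟩ := hw j (by lia) (by lia)
    obtain ⟨hzj', hjz'⟩ := hw (j + 1) (by lia) hj
    have hbracket : qBracket q⁻¹ (z θ q i j * w j) (z θ q j (j + 1) * w (j + 1)) =
        (q⁻¹ * (q - q⁻¹)) • (z θ q i (j + 1) * w (j + 1)) :=
      qBracket_z_mul_units_inv hq0 hi hij j.lt_succ_self hj
        (u := ⟨_, w j, hzj, hjz⟩) (v := ⟨_, w (j + 1), hzj', hjz'⟩) rfl rfl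
    calc E i (j + 1) = qBracket q⁻¹ (E i j) (E j (j + 1)) := hE_step i (j + 1) hi (by lia) hj
      _ = (rootCoeff q i j * -(q - q⁻¹)⁻¹ * (q⁻¹ * (q - q⁻¹))) •
          (z θ q i (j + 1) * w (j + 1)) := by
        rw [ih (by lia), hE_simple j (by lia) (by lia), qBracket_smul_smul, hbracket, smul_smul]
      _ = rootCoeff q i (j + 1) • (z θ q i (j + 1) * w (j + 1)) := by
        rw [rootCoeff_succ_right hq0 (by lia)]
        congr 1
        linear_combination
          -q⁻¹ * rootCoeff q i j * inv_mul_cancel₀ (sub_inv_ne_zero hq0 hq1 hqm1)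

end SLq
end
end

section
/- In the tensor product algebra 𝒪_q(B⁺) ⊗_ℂ 𝒪_q(B⁺): for all indices with i ≤ t < s ≤ j ≤ n such that t ≠ s' and (if n is odd) n₀ ∉ {i, j}, one has (z_{is} ⊗ z_{sj})(z_{it} ⊗ z_{tj}) = q^{−2} (z_{it} ⊗ z_{tj})(z_{is} ⊗ z_{sj}). -/
noncomputable section
open scoped TensorProduct

namespace SOq

/-!
At an index pair off the antidiagonal `i = j'` the matrix `J` does not contribute to `R`, so the
coefficients `R^{ij}_{ab}` are those of quantum `GL_n`. The symmetry `R^{ij}_{ab} = R^{ba}_{ji}`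
gives both sides of the FRT relation the same shape, so rows and columns behave alike: two entries
in columns `t < s`, `s ≠ t'`, of a row `i ≠ i'` commute up to `q⁻¹`, and so do two entries in rows
`t < s`, `s ≠ t'`, of a column `j ≠ j'`. In the tensor square each contributes one factor `q⁻¹`.
-/

section TensorProduct

variable {R A B : Type*} [CommSemiring R] [Semiring A] [Algebra R A] [Semiring B] [Algebra R B]

theorem tmul_mul_tmul_eq_smul_of_mul_eq_smul {r s : R} {a₁ a₂ : A} {b₁ b₂ : B}
    (ha : a₁ * a₂ = r • (a₂ * a₁)) (hb : b₁ * b₂ = s • (b₂ * b₁)) :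
    (a₁ ⊗ₜ[R] b₁) * (a₂ ⊗ₜ[R] b₂) = (r * s) • ((a₂ ⊗ₜ[R] b₂) * (a₁ ⊗ₜ[R] b₁)) := by
  simp only [Algebra.TensorProduct.tmul_mul_tmul, ha, hb, TensorProduct.smul_tmul_smul]

end TensorProduct

section Module

variable {R M : Type*} [Ring R] [AddCommGroup M] [Module R M]

theorem eq_smul_of_add_sub_smul_eq_smul {r s : R} {x y : M} (h : x + (s - r) • y = s • y) :
    x = r • y := by
  rw [eq_sub_of_add_eq h, ← sub_smul, sub_sub_cancel]

end Module

section Index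

variable {n i j : ℕ}

theorem eq_pr_comm_s19 (hi : 1 ≤ i) (hj : 1 ≤ j) : i = pr n j ↔ j = pr n i := by
  unfold pr
  omega

theorem ne_pr_self_s19 (h : 2 * i ≠ n + 1) : i ≠ pr n i := by
  unfold pr
  omega

end Index

section RMatrix

variable {n : ℕ} {q v : ℂ} {i j a b : ℕ}

theorem Jc_mul_Jc_symm (hi : 1 ≤ i) (hb : 1 ≤ b) :
    (if a < i then (1 : ℂ) else 0) * (Jc n v j i * Jc n v a b) =
      (if j < b then (1 : ℂ) else 0) * (Jc n v a b * Jc n v j i) := by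
  by_cases h : i = pr n j ∧ b = pr n a
  · have hlt : a < i ↔ j < b := by
      unfold pr at h
      omega
    simp only [hlt, mul_comm (Jc n v a b)]
  · have hJ : Jc n v j i * Jc n v a b = 0 := by
      rcases not_and_or.1 h with h | h <;> simp [Jc, h]
    rw [mul_comm (Jc n v a b), hJ, mul_zero, mul_zero]

theorem Rc_symm (hi : 1 ≤ i) (hb : 1 ≤ b) : Rc n q v i j a b = Rc n q v b a j i := by
  have hpow : q ^ (((if i = j then 1 else 0) - (if i = pr n j then 1 else 0) : ℤ)) *
        (if i = a then (1 : ℂ) else 0) * (if j = b then (1 : ℂ) else 0) =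
      q ^ (((if b = a then 1 else 0) - (if b = pr n a then 1 else 0) : ℤ)) *
        (if b = j then (1 : ℂ) else 0) * (if a = i then (1 : ℂ) else 0) := by
    by_cases h : a = i ∧ b = j
    · obtain ⟨rfl, rfl⟩ := h
      simp [eq_pr_comm_s19 hi hb, eq_comm (a := a)]
    · rcases not_and_or.1 h with h | h <;> simp [h, Ne.symm h]
  have hswap : (if a < i then (1 : ℂ) else 0) *
        ((if j = a then (1 : ℂ) else 0) * (if i = b then (1 : ℂ) else 0)) =
      (if j < b then (1 : ℂ) else 0) *
        ((if a = j then (1 : ℂ) else 0) * (if b = i then (1 : ℂ) else 0)) := by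
    grind
  have hJ := Jc_mul_Jc_symm (n := n) (v := v) (j := j) (a := a) hi hb
  unfold Rc
  linear_combination hpow + (q - q⁻¹) * (hswap - hJ)

theorem Rc_of_ne_pr (h : i ≠ pr n j) :
    Rc n q v i j a b = (if a = i ∧ b = j then if i = j then q else 1 else 0) +
      if a = j ∧ b = i ∧ j < i then q - q⁻¹ else 0 := by
  have hJ : Jc n v j i = 0 := if_neg h
  unfold Rc
  rw [hJ, if_neg h]
  split_ifs <;> grind [zpow_zero, zpow_one]

variable {M : Type*} [AddCommGroup M] [Module ℂ M] (f : ℕ → ℕ → M)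

theorem sum_Rc_smul_of_ne_pr (hi : i ∈ Finset.Icc 1 n) (hj : j ∈ Finset.Icc 1 n)
    (h : j ≠ pr n i) :
    ∑ k ∈ Finset.Icc 1 n, ∑ l ∈ Finset.Icc 1 n, Rc n q v j i k l • f k l =
      (if i = j then q else 1) • f j i + (if i < j then q - q⁻¹ else 0) • f i j := by
  simp only [Rc_of_ne_pr h, add_smul, Finset.sum_add_distrib, ite_smul, zero_smul, ite_and,
    Finset.sum_ite_irrel, Finset.sum_ite_eq', Finset.sum_const_zero, hi, hj, if_true,
    eq_comm (a := i)]

end RMatrix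

section Borel

variable {n : ℕ} {q v : ℂ}

theorem sum_Rc_smul_z_mul_z {i b j a : ℕ} (hi : i ∈ Finset.Icc 1 n) (hb : b ∈ Finset.Icc 1 n)
    (hj : j ∈ Finset.Icc 1 n) (ha : a ∈ Finset.Icc 1 n) :
    ∑ k ∈ Finset.Icc 1 n, ∑ l ∈ Finset.Icc 1 n, Rc n q v b a k l • (z n q v i k * z n q v j l) =
      ∑ k ∈ Finset.Icc 1 n, ∑ l ∈ Finset.Icc 1 n,
        Rc n q v j i k l • (z n q v k a * z n q v l b) := by
  have hfrt := RingQuot.mkAlgHom_rel ℂ (Rel.frt (q := q) (v := v) i b j a hi hb hj ha)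
  simp only [frtRel, Finset.sum_sub_distrib, map_zero, map_sub, map_sum, map_smul, map_mul,
    sub_eq_zero] at hfrt
  refine Eq.trans (Finset.sum_congr rfl fun k _ => Finset.sum_congr rfl fun l hl => ?_) hfrt
  rw [Rc_symm (Finset.mem_Icc.1 hl).1 (Finset.mem_Icc.1 hb).1]
  rfl

theorem z_exchange_of_ne_pr {i b j a : ℕ} (hi : i ∈ Finset.Icc 1 n) (hb : b ∈ Finset.Icc 1 n)
    (hj : j ∈ Finset.Icc 1 n) (ha : a ∈ Finset.Icc 1 n) (hab : b ≠ pr n a) (hij : j ≠ pr n i) :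
    (if a = b then q else 1) • (z n q v i b * z n q v j a) +
        (if a < b then q - q⁻¹ else 0) • (z n q v i a * z n q v j b) =
      (if i = j then q else 1) • (z n q v j a * z n q v i b) +
        (if i < j then q - q⁻¹ else 0) • (z n q v i a * z n q v j b) :=
  calc
    _ = ∑ k ∈ Finset.Icc 1 n, ∑ l ∈ Finset.Icc 1 n,
          Rc n q v b a k l • (z n q v i k * z n q v j l) :=
      (sum_Rc_smul_of_ne_pr (fun k l => z n q v i k * z n q v j l) ha hb hab).symm
    _ = ∑ k ∈ Finset.Icc 1 n, ∑ l ∈ Finset.Icc 1 n,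
          Rc n q v j i k l • (z n q v k a * z n q v l b) := sum_Rc_smul_z_mul_z hi hb hj ha
    _ = _ := sum_Rc_smul_of_ne_pr (fun k l => z n q v k a * z n q v l b) hi hj hij

theorem z_row_mul_eq_inv_smul {i s t : ℕ} (hi : i ∈ Finset.Icc 1 n) (hs : s ∈ Finset.Icc 1 n)
    (ht : t ∈ Finset.Icc 1 n) (hts : t < s) (hst : s ≠ pr n t) (hii : i ≠ pr n i) :
    z n q v i s * z n q v i t = q⁻¹ • (z n q v i t * z n q v i s) := by
  refine eq_smul_of_add_sub_smul_eq_smul (M := OB n q v) (s := q) ?_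
  simpa [hts, hts.ne] using z_exchange_of_ne_pr (q := q) (v := v) hi hs hi ht hst hii

theorem z_col_mul_eq_inv_smul {j s t : ℕ} (hj : j ∈ Finset.Icc 1 n) (hs : s ∈ Finset.Icc 1 n)
    (ht : t ∈ Finset.Icc 1 n) (hts : t < s) (hst : s ≠ pr n t) (hjj : j ≠ pr n j) :
    z n q v s j * z n q v t j = q⁻¹ • (z n q v t j * z n q v s j) := by
  refine eq_smul_of_add_sub_smul_eq_smul (M := OB n q v) (s := q) ?_
  simpa [hts, hts.ne] using (z_exchange_of_ne_pr (q := q) (v := v) ht hj hs hj hjj hst).symm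

end Borel

/-- `q²`-commutation in the tensor square of `𝒪_q(B⁺)` of type `SO_n`:
for `i ≤ t < s ≤ j ≤ n` with `t ≠ s'` and (if `n` is odd) `n₀ ∉ {i, j}`, one has
`(z_{is} ⊗ z_{sj})(z_{it} ⊗ z_{tj}) = q^{-2} (z_{it} ⊗ z_{tj})(z_{is} ⊗ z_{sj})`. -/
theorem tensor_square_commutation (n : ℕ) (hn : 3 ≤ n) (q v : ℂ) (hq0 : q ≠ 0)
    (hv : v ^ 2 = q) :
    ∀ i t s j : ℕ, 1 ≤ i → i ≤ t → t < s → s ≤ j → j ≤ n →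
      t ≠ pr n s → 2 * i ≠ n + 1 → 2 * j ≠ n + 1 →
      (z n q v i s ⊗ₜ[ℂ] z n q v s j) * (z n q v i t ⊗ₜ[ℂ] z n q v t j) =
        (q ^ (-2 : ℤ)) •
          ((z n q v i t ⊗ₜ[ℂ] z n q v t j) * (z n q v i s ⊗ₜ[ℂ] z n q v s j)) := by
  intro i t s j hi hit hts hsj hj hts' hii hjj
  have hi_mem : i ∈ Finset.Icc 1 n := Finset.mem_Icc.2 (by omega)
  have ht_mem : t ∈ Finset.Icc 1 n := Finset.mem_Icc.2 (by omega)
  have hs_mem : s ∈ Finset.Icc 1 n := Finset.mem_Icc.2 (by omega)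
  have hj_mem : j ∈ Finset.Icc 1 n := Finset.mem_Icc.2 (by omega)
  have hst : s ≠ pr n t :=
    (eq_pr_comm_s19 (Finset.mem_Icc.1 ht_mem).1 (Finset.mem_Icc.1 hs_mem).1).not.1 hts'
  have hq : q ^ (-2 : ℤ) = q⁻¹ * q⁻¹ := by
    rw [zpow_neg, zpow_ofNat, pow_two, mul_inv]
  rw [hq]
  exact tmul_mul_tmul_eq_smul_of_mul_eq_smul
    (z_row_mul_eq_inv_smul hi_mem hs_mem ht_mem hts hst (ne_pr_self_s19 hii))
    (z_col_mul_eq_inv_smul hj_mem hs_mem ht_mem hts hst (ne_pr_self_s19 hjj))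

end SOq
end
end
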